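/- Let A ∈ ℝ^{m×n}, b ∈ ℝ^m, ε ∈ (0,1/2], P a d×n real matrix, r₀ > 0 with 2ε/r₀ ≤ 1, and set λ = 2ε/r₀. Suppose u⁺, u₀ ∈ ℝ^d satisfy: APᵀu⁺ ≤ b + ε and ‖u⁺‖ ≤ 1 + ε; APᵀu₀ ≤ b + ε − r₀(1−ε) componentwise; and ‖u₀‖ ≤ 1 + ε − r₀. Then the point û = (1−λ)u⁺ + λu₀ satisfies APᵀû ≤ b and ‖û‖ ≤ 1 − ε, i.e. û is feasible for the shrunk projected problem (P⁻_ε). -/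

import Mathlib

/-!
Both constraints are convex, so `û` satisfies the convex combination of the two bounds.
With `λ * r₀ = 2 * ε`, the linear bound becomes `b + ε - 2 * ε * (1 - ε) = b - ε * (1 - 2 * ε) ≤ b`
and, by the triangle inequality (`euclNorm_combo_le`), the norm bound becomes
`1 + ε - 2 * ε = 1 - ε`.
-/

open Matrix

/-- The Euclidean norm of a vector in `ℝⁿ`. -/
noncomputable def euclNorm {k : ℕ} (x : Fin k → ℝ) : ℝ := Real.sqrt (∑ i, x i ^ 2)

lemma euclNorm_eq_norm {k : ℕ} (x : Fin k → ℝ) : euclNorm x = ‖WithLp.toLp 2 x‖ := by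
  simp [euclNorm, EuclideanSpace.norm_eq]

lemma euclNorm_combo_le {k : ℕ} (x y : Fin k → ℝ) {s t : ℝ} (hs : 0 ≤ s) (ht : 0 ≤ t) :
    euclNorm (s • x + t • y) ≤ s * euclNorm x + t * euclNorm y := by
  simp only [euclNorm_eq_norm, WithLp.toLp_add, WithLp.toLp_smul]
  refine (norm_add_le _ _).trans_eq ?_
  rw [norm_smul_of_nonneg hs, norm_smul_of_nonneg ht]

/-- **Deterministic interpolation step.** Let `ε ∈ (0,1/2]`, `r₀ > 0` with `2ε/r₀ ≤ 1`, and set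
`λ = 2ε/r₀`. If `u⁺` satisfies `APᵀu⁺ ≤ b + ε` and `‖u⁺‖ ≤ 1 + ε`, and `u₀` satisfies
`APᵀu₀ ≤ b + ε − r₀(1−ε)` and `‖u₀‖ ≤ 1 + ε − r₀`, then `û = (1−λ)u⁺ + λu₀` satisfies
`APᵀû ≤ b` and `‖û‖ ≤ 1 − ε`, i.e. `û` is feasible for `(P⁻_ε)`. -/
theorem stmt14
    {d n m : ℕ} (A : Matrix (Fin m) (Fin n) ℝ) (b : Fin m → ℝ)
    (ε : ℝ) (hε0 : 0 < ε) (hε1 : ε ≤ 1 / 2)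
    (P : Matrix (Fin d) (Fin n) ℝ)
    (r₀ : ℝ) (hr₀ : 0 < r₀) (hlam : 2 * ε / r₀ ≤ 1)
    (uplus u₀ : Fin d → ℝ)
    (hplusA : ∀ i, A.mulVec (Pᵀ.mulVec uplus) i ≤ b i + ε)
    (hplusn : euclNorm uplus ≤ 1 + ε)
    (h₀A : ∀ i, A.mulVec (Pᵀ.mulVec u₀) i ≤ b i + ε - r₀ * (1 - ε))
    (h₀n : euclNorm u₀ ≤ 1 + ε - r₀) :
    (∀ i, A.mulVec (Pᵀ.mulVec
        ((1 - 2 * ε / r₀) • uplus + (2 * ε / r₀) • u₀)) i ≤ b i) ∧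
      euclNorm ((1 - 2 * ε / r₀) • uplus + (2 * ε / r₀) • u₀) ≤ 1 - ε := by
  -- `r₀` enters the bounds only through `λ * r₀ = 2 * ε`.
  have hmul : 2 * ε / r₀ * r₀ = 2 * ε := div_mul_cancel₀ _ hr₀.ne'
  have hnonneg : 0 ≤ 2 * ε / r₀ := by positivity
  generalize 2 * ε / r₀ = t at *
  have ht : 0 ≤ 1 - t := by linarith
  constructor
  · intro i
    simp only [mulVec_add, mulVec_smul, Pi.add_apply, Pi.smul_apply, smul_eq_mul]
    have h1 := mul_le_mul_of_nonneg_left (hplusA i) ht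
    have h2 := mul_le_mul_of_nonneg_left (h₀A i) hnonneg
    -- The convex combination of the bounds is `b i + ε - 2 * ε * (1 - ε)`,
    -- which is at most `b i` exactly because `ε ≤ 1 / 2`.
    have h3 : t * (r₀ * (1 - ε)) = 2 * ε * (1 - ε) := by rw [← mul_assoc, hmul]
    nlinarith [mul_nonneg hε0.le (sub_nonneg.2 hε1)]
  · have h1 := mul_le_mul_of_nonneg_left hplusn ht
    have h2 := mul_le_mul_of_nonneg_left h₀n hnonneg
    have h3 := euclNorm_combo_le uplus u₀ ht hnonneg
    linarith
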